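/- Let p and q be complex-valued polynomial functions on ℝ³ that are homogeneous of degrees ℓ and m respectively with ℓ ≠ m, and both harmonic (annihilated by the Euclidean Laplacian Σ_j ∂²/∂x_j²). Then the surface integral over the unit sphere S² ⊂ ℝ³ of the product p·q vanishes: ∫_{S²} p(n) q(n) dA(n) = 0. -/

import Mathlib

open MeasureTheory

/-- The partial derivative `∂f/∂x_j` of a complex-valued function on Euclidean `ℝ³`. -/
noncomputable def pdE (j : Fin 3) (f : EuclideanSpace ℝ (Fin 3) → ℂ)
    (x : EuclideanSpace ℝ (Fin 3)) : ℂ :=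
  fderiv ℝ f x (EuclideanSpace.single j 1)

/-- Evaluation of a complex polynomial in three variables at a real point of `ℝ³`. -/
noncomputable def evalP (P : MvPolynomial (Fin 3) ℂ) (x : EuclideanSpace ℝ (Fin 3)) : ℂ :=
  MvPolynomial.eval (fun i => (x i : ℂ)) P

/-!
The divergence of the field `f ∇g - g ∇f` is `f Δg - g Δf`. Integrating it by parts against the
Gaussian `exp (-‖x‖²)` only sees the radial component of the field, which by Euler's identity is
`(b - a) f g` for `f`, `g` homogeneous of degrees `a`, `b`:
`∫ exp (-‖x‖²) (f Δg - g Δf) = 2 (b - a) ∫ exp (-‖x‖²) f g`.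
For harmonic `f`, `g` and `a ≠ b` the integral on the right therefore vanishes, and in polar
coordinates it is a positive radial factor times the integral of `f g` over the unit sphere.
-/

open Asymptotics Filter InnerProductSpace Metric Module Set
open scoped Laplacian Topology

section Homogeneous

variable {E F 𝔸 : Type*} [NormedAddCommGroup E] [NormedSpace ℝ E]
  [NormedAddCommGroup F] [NormedSpace ℝ F] [NormedRing 𝔸] [NormedAlgebra ℝ 𝔸]
  {f g : E → F} {a b : ℝ}

/-- Positive homogeneity of real degree `a`: scaling by `r > 0` multiplies `f` by `r ^ a`.
The degree is real so that differentiation can lower it without a truncated subtraction. -/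
def IsPosHomogeneous (f : E → F) (a : ℝ) : Prop :=
  ∀ ⦃r : ℝ⦄, 0 < r → ∀ x, f (r • x) = r ^ a • f x

namespace IsPosHomogeneous

theorem sub (hf : IsPosHomogeneous f a) (hg : IsPosHomogeneous g a) :
    IsPosHomogeneous (fun x ↦ f x - g x) a := fun r hr x ↦ by
  simp only [hf hr, hg hr, smul_sub]

theorem smul {c : E → ℝ} (hc : IsPosHomogeneous c a) (hf : IsPosHomogeneous f b) :
    IsPosHomogeneous (fun x ↦ c x • f x) (a + b) := fun r hr x ↦ by
  simp only [hc hr, hf hr, Real.rpow_add hr, smul_eq_mul, smul_smul]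
  congr 1
  ring

theorem mul {f g : E → 𝔸} (hf : IsPosHomogeneous f a) (hg : IsPosHomogeneous g b) :
    IsPosHomogeneous (fun x ↦ f x * g x) (a + b) := fun r hr x ↦ by
  simp only [hf hr, hg hr, Real.rpow_add hr, smul_mul_smul_comm]

theorem fderiv_apply (hf : IsPosHomogeneous f a) (v : E) :
    IsPosHomogeneous (fun x ↦ fderiv ℝ f x v) (a - 1) := fun r hr x ↦ by
  have h : r • fderiv ℝ f (r • x) v = r ^ a • fderiv ℝ f x v := by
    have hfun : (f <| r • ·) = r ^ a • f := funext (hf hr)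
    simpa only [fderiv_comp_smul, fderiv_const_smul_field, Pi.smul_apply,
      _root_.smul_apply] using congrArg (fun h ↦ fderiv ℝ h x v) hfun
  rw [Real.rpow_sub_one hr.ne', div_eq_inv_mul, mul_smul, ← h, inv_smul_smul₀ hr.ne']

theorem fderiv_apply_self (hf : IsPosHomogeneous f a) {x : E} (hd : DifferentiableAt ℝ f x) :
    fderiv ℝ f x x = a • f x := by
  have hray : HasDerivAt (fun r : ℝ ↦ r • x) x 1 := by
    simpa using (hasDerivAt_id (1 : ℝ)).smul_const x
  have hcomp : HasDerivAt (fun r : ℝ ↦ f (r • x)) (fderiv ℝ f x x) 1 := by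
    rw [← one_smul ℝ x] at hd
    simpa [Function.comp_def] using hd.hasFDerivAt.comp_hasDerivAt (1 : ℝ) hray
  have hpow : HasDerivAt (fun r : ℝ ↦ r ^ a • f x) (a • f x) 1 := by
    simpa using (Real.hasDerivAt_rpow_const (p := a) (Or.inl one_ne_zero)).smul_const (f x)
  refine hcomp.unique (hpow.congr_of_eventuallyEq ?_)
  filter_upwards [lt_mem_nhds one_pos] with r hr using hf hr x

theorem degree_nonneg (hf : IsPosHomogeneous f a) (hc : Continuous f) {x : E} (hx : f x ≠ 0) :
    0 ≤ a := by
  by_contra! ha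
  have hbdd : Tendsto (fun r : ℝ ↦ ‖f (r • x)‖) (𝓝[>] 0) (𝓝 ‖f ((0 : ℝ) • x)‖) :=
    (Continuous.tendsto (by fun_prop) 0).mono_left nhdsWithin_le_nhds
  have htop : Tendsto (fun r : ℝ ↦ r ^ a * ‖f x‖) (𝓝[>] 0) atTop :=
    (tendsto_rpow_neg_nhdsGT_zero ha).atTop_mul_const (norm_pos_iff.2 hx)
  refine not_tendsto_nhds_of_tendsto_atTop (htop.congr' ?_) _ hbdd
  filter_upwards [self_mem_nhdsWithin] with r hr
  rw [hf hr, norm_smul, Real.norm_of_nonneg (Real.rpow_nonneg (mem_Ioi.1 hr).le a)]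

theorem eq_rpow_norm_smul (hf : IsPosHomogeneous f a) {x : E} (hx : x ≠ 0) :
    f x = ‖x‖ ^ a • f (‖x‖⁻¹ • x) := by
  rw [← hf (norm_pos_iff.2 hx), smul_inv_smul₀ (norm_ne_zero_iff.2 hx)]

theorem exists_norm_le [ProperSpace E] (hf : IsPosHomogeneous f a) (hc : Continuous f) :
    ∃ C, ∀ x ≠ 0, ‖f x‖ ≤ C * ‖x‖ ^ a := by
  obtain ⟨C, hC⟩ := (isCompact_sphere (0 : E) 1).exists_bound_of_continuousOn hc.continuousOn
  refine ⟨C, fun x hx ↦ ?_⟩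
  have hunit : ‖x‖⁻¹ • x ∈ sphere (0 : E) 1 := by simp [norm_smul, hx]
  rw [hf.eq_rpow_norm_smul hx, norm_smul, mul_comm,
    Real.norm_of_nonneg (Real.rpow_nonneg (norm_nonneg x) a)]
  exact mul_le_mul_of_nonneg_right (hC _ hunit) (Real.rpow_nonneg (norm_nonneg x) a)

end IsPosHomogeneous

section Integration

variable [FiniteDimensional ℝ E] [MeasurableSpace E] [BorelSpace E]
  (μ : Measure E) [μ.IsAddHaarMeasure]

theorem integrable_exp_neg_mul_norm [Nontrivial E] {c : ℝ} (hc : 0 < c) :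
    Integrable (fun x ↦ Real.exp (-c * ‖x‖)) μ := by
  refine (integrable_fun_norm_addHaar μ (f := fun r ↦ Real.exp (-c * r))).2 ?_
  simpa using integrableOn_rpow_mul_exp_neg_mul_rpow
    (s := ((finrank ℝ E - 1 : ℕ) : ℝ)) (by linarith [Nat.cast_nonneg (α := ℝ) (finrank ℝ E - 1)])
    one_pos hc

theorem IsPosHomogeneous.integrable_exp_neg_norm_sq_smul [Nontrivial E]
    (hf : IsPosHomogeneous f a) (hc : Continuous f) :
    Integrable (fun x ↦ Real.exp (-‖x‖ ^ 2) • f x) μ := by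
  obtain ⟨C, hC⟩ := hf.exists_norm_le hc
  have hbound : (fun x : E ↦ Real.exp (-‖x‖ ^ 2) • f x) =O[cocompact E]
      fun x ↦ ‖x‖ ^ a * Real.exp (-1 * ‖x‖ ^ 2) := by
    refine .of_bound C ?_
    filter_upwards [(isCompact_singleton (x := (0 : E))).compl_mem_cocompact] with x hx
    have h := mul_le_mul_of_nonneg_left (hC x hx) (Real.exp_pos (-‖x‖ ^ 2)).le
    simpa [norm_smul, abs_of_nonneg, Real.rpow_nonneg, mul_comm, mul_assoc, mul_left_comm] using h
  have hdecay : (fun x : E ↦ ‖x‖ ^ a * Real.exp (-1 * ‖x‖ ^ 2)) =O[cocompact E]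
      fun x ↦ Real.exp (-(1 / 2) * ‖x‖) :=
    (rpow_mul_exp_neg_mul_sq_isLittleO_exp_neg one_pos a).isBigO.comp_tendsto
      tendsto_norm_cocompact_atTop
  have hcont : Continuous fun x : E ↦ Real.exp (-‖x‖ ^ 2) • f x := by fun_prop
  exact hcont.locallyIntegrable.integrable_of_isBigO_cocompact (hbound.trans hdecay)
    ((integrable_exp_neg_mul_norm μ one_half_pos).integrableAtFilter _)

theorem integral_volumeIoiPow (n : ℕ) (φ : ℝ → F) :
    ∫ r : Ioi (0 : ℝ), φ r ∂Measure.volumeIoiPow n = ∫ r in Ioi (0 : ℝ), r ^ n • φ r := by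
  simp only [Measure.volumeIoiPow, ENNReal.ofReal]
  rw [integral_withDensity_eq_integral_smul (measurable_subtype_coe.pow_const _).real_toNNReal,
    integral_subtype_comap measurableSet_Ioi fun r ↦ Real.toNNReal (r ^ n) • φ r]
  refine setIntegral_congr_fun measurableSet_Ioi fun r hr ↦ ?_
  rw [NNReal.smul_def, Real.coe_toNNReal _ (pow_nonneg (mem_Ioi.1 hr).le _)]

theorem IsPosHomogeneous.integral_norm_smul [Nontrivial E] (hf : IsPosHomogeneous f a)
    (φ : ℝ → ℝ) :
    ∫ x, φ ‖x‖ • f x ∂μ =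
      (∫ r in Ioi (0 : ℝ), r ^ (finrank ℝ E - 1) * (φ r * r ^ a)) •
        ∫ n : sphere (0 : E) 1, f n ∂μ.toSphere := calc
  ∫ x, φ ‖x‖ • f x ∂μ = ∫ x : ({0}ᶜ : Set E), φ ‖x.1‖ • f x ∂(μ.comap (↑)) := by
    rw [integral_subtype_comap (measurableSet_singleton _).compl fun x ↦ φ ‖x‖ • f x,
      restrict_compl_singleton]
  _ = ∫ x : ({0}ᶜ : Set E), (φ ‖x.1‖ * ‖x.1‖ ^ a) • f (‖x.1‖⁻¹ • x.1) ∂(μ.comap (↑)) := by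
    congr with x
    rw [mul_smul, ← hf.eq_rpow_norm_smul x.2]
  _ = ∫ p, (φ p.2 * (p.2 : ℝ) ^ a) • f p.1
        ∂μ.toSphere.prod (.volumeIoiPow (finrank ℝ E - 1)) := by
    simpa using μ.measurePreserving_homeomorphUnitSphereProd.integral_comp
      (Homeomorph.measurableEmbedding _)
      fun p : sphere (0 : E) 1 × Ioi (0 : ℝ) ↦ (φ p.2 * (p.2 : ℝ) ^ a) • f p.1
  _ = (∫ r : Ioi (0 : ℝ), φ r * (r : ℝ) ^ a ∂.volumeIoiPow (finrank ℝ E - 1)) •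
        ∫ n : sphere (0 : E) 1, f n ∂μ.toSphere := by
    rw [← integral_prod_swap]
    exact integral_prod_smul (fun r : Ioi (0 : ℝ) ↦ φ r * (r : ℝ) ^ a)
      fun n : sphere (0 : E) 1 ↦ f n
  _ = _ := by
    rw [integral_volumeIoiPow _ fun r ↦ φ r * r ^ a]
    simp only [smul_eq_mul]

theorem IsPosHomogeneous.integral_exp_neg_norm_sq_smul [Nontrivial E] (hf : IsPosHomogeneous f a)
    (ha : 0 < finrank ℝ E + a) :
    ∫ x, Real.exp (-‖x‖ ^ 2) • f x ∂μ =
      (1 / 2 * Real.Gamma ((finrank ℝ E + a) / 2)) •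
        ∫ n : sphere (0 : E) 1, f n ∂μ.toSphere := by
  have hfinrank : ((finrank ℝ E - 1 : ℕ) : ℝ) = finrank ℝ E - 1 := by
    rw [Nat.cast_sub finrank_pos, Nat.cast_one]
  have hGamma := integral_rpow_mul_exp_neg_rpow (p := 2) (q := finrank ℝ E - 1 + a) two_pos
    (by linarith)
  rw [show (finrank ℝ E : ℝ) - 1 + a + 1 = finrank ℝ E + a by ring] at hGamma
  rw [hf.integral_norm_smul μ fun r ↦ Real.exp (-r ^ 2), ← hGamma]
  congr 1
  refine setIntegral_congr_fun measurableSet_Ioi fun r hr ↦ ?_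
  simp only [Real.rpow_add (mem_Ioi.1 hr), ← hfinrank, Real.rpow_natCast, Real.rpow_two]
  ring

end Integration

end Homogeneous

section InnerProductSpace

variable {E F 𝔸 : Type*} [NormedAddCommGroup E] [InnerProductSpace ℝ E]
  [NormedAddCommGroup F] [NormedSpace ℝ F] [NormedRing 𝔸] [NormedAlgebra ℝ 𝔸]
  {a b : ℝ}

theorem isPosHomogeneous_inner_right (v : E) : IsPosHomogeneous (fun x ↦ inner ℝ v x) 1 :=
  fun r _ x ↦ by simp only [inner_smul_right, Real.rpow_one, smul_eq_mul]

theorem hasFDerivAt_exp_neg_norm_sq (x : E) :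
    HasFDerivAt (fun x : E ↦ Real.exp (-‖x‖ ^ 2))
      (Real.exp (-‖x‖ ^ 2) • -((2 : ℕ) • innerSL ℝ x) : E →L[ℝ] ℝ) x :=
  (hasStrictFDerivAt_norm_sq x).hasFDerivAt.fun_neg.exp

theorem fderiv_fderiv_apply {f : E → F} (hf : ContDiff ℝ 2 f) (x v w : E) :
    fderiv ℝ (fun y ↦ fderiv ℝ f y v) x w = iteratedFDeriv ℝ 2 f x ![w, v] := by
  have hd : DifferentiableAt ℝ (fderiv ℝ f) x :=
    (hf.fderiv_right (m := 1) le_rfl).differentiable one_ne_zero x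
  rw [iteratedFDeriv_two_apply, fderiv_clm_apply hd (differentiableAt_const v)]
  simp

/-- The Wronskian of `f` and `g` at `x` in the direction `v`; as a function of `v`, it is the
covector field whose divergence appears in Green's second identity. -/
noncomputable def dirWronskian (f g : E → 𝔸) (v x : E) : 𝔸 :=
  f x * fderiv ℝ g x v - fderiv ℝ f x v * g x

section Wronskian

variable {f g : E → 𝔸}

theorem contDiff_dirWronskian (hf : ContDiff ℝ 2 f) (hg : ContDiff ℝ 2 g) (v : E) :
    ContDiff ℝ 1 (dirWronskian f g v) := by
  have hf' : ContDiff ℝ 1 (fderiv ℝ f) := hf.fderiv_right le_rfl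
  have hg' : ContDiff ℝ 1 (fderiv ℝ g) := hg.fderiv_right le_rfl
  exact ((hf.of_le one_le_two).mul (hg'.clm_apply contDiff_const)).sub
    ((hf'.clm_apply contDiff_const).mul (hg.of_le one_le_two))

theorem isPosHomogeneous_dirWronskian (hf : IsPosHomogeneous f a) (hg : IsPosHomogeneous g b)
    (v : E) : IsPosHomogeneous (dirWronskian f g v) (a + b - 1) := by
  have hfg : IsPosHomogeneous (fun x ↦ f x * fderiv ℝ g x v) (a + b - 1) := by
    simpa only [add_sub_assoc] using hf.mul (hg.fderiv_apply v)
  have hgf : IsPosHomogeneous (fun x ↦ fderiv ℝ f x v * g x) (a + b - 1) := by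
    simpa only [sub_add_eq_add_sub] using (hf.fderiv_apply v).mul hg
  exact hfg.sub hgf

theorem dirWronskian_self_of_isPosHomogeneous (hf : IsPosHomogeneous f a)
    (hg : IsPosHomogeneous g b) {x : E} (hdf : DifferentiableAt ℝ f x)
    (hdg : DifferentiableAt ℝ g x) : dirWronskian f g x x = (b - a) • (f x * g x) := by
  rw [dirWronskian, hf.fderiv_apply_self hdf, hg.fderiv_apply_self hdg, mul_smul_comm,
    smul_mul_assoc, sub_smul]

theorem fderiv_dirWronskian_apply_self (hf : ContDiff ℝ 2 f) (hg : ContDiff ℝ 2 g) (v x : E) :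
    fderiv ℝ (dirWronskian f g v) x v =
      f x * iteratedFDeriv ℝ 2 g x ![v, v] - iteratedFDeriv ℝ 2 f x ![v, v] * g x := by
  have hdf : DifferentiableAt ℝ f x := hf.differentiable two_ne_zero x
  have hdg : DifferentiableAt ℝ g x := hg.differentiable two_ne_zero x
  have hdf' : DifferentiableAt ℝ (fun y ↦ fderiv ℝ f y v) x :=
    ((hf.fderiv_right (m := 1) le_rfl).differentiable one_ne_zero x).clm_apply
      (differentiableAt_const v)
  have hdg' : DifferentiableAt ℝ (fun y ↦ fderiv ℝ g y v) x :=
    ((hg.fderiv_right (m := 1) le_rfl).differentiable one_ne_zero x).clm_apply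
      (differentiableAt_const v)
  unfold dirWronskian
  rw [fderiv_fun_sub (hdf.fun_mul hdg') (hdf'.fun_mul hdg), fderiv_fun_mul' hdf hdg',
    fderiv_fun_mul' hdf' hdg]
  simp only [sub_apply, add_apply, smul_apply, smul_eq_mul, MulOpposite.smul_eq_mul_unop,
    MulOpposite.unop_op, fderiv_fderiv_apply hf, fderiv_fderiv_apply hg]
  abel

variable {ι : Type*} [Fintype ι] (e : OrthonormalBasis ι ℝ E)

theorem sum_inner_smul_dirWronskian (f g : E → 𝔸) (x : E) :
    ∑ i, inner ℝ (e i) x • dirWronskian f g (e i) x = dirWronskian f g x x := by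
  have hexpand (L : E →L[ℝ] 𝔸) : L x = ∑ i, inner ℝ (e i) x • L (e i) := by
    conv_lhs => rw [← e.sum_repr' x]
    simp only [map_sum, map_smul]
  simp only [dirWronskian, hexpand (fderiv ℝ f x), hexpand (fderiv ℝ g x), smul_sub,
    Finset.sum_sub_distrib, Finset.mul_sum, Finset.sum_mul, mul_smul_comm, smul_mul_assoc]

theorem sum_fderiv_dirWronskian [FiniteDimensional ℝ E] (hf : ContDiff ℝ 2 f)
    (hg : ContDiff ℝ 2 g) (x : E) :
    ∑ i, fderiv ℝ (dirWronskian f g (e i)) x (e i) = f x * Δ g x - Δ f x * g x := by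
  simp only [fderiv_dirWronskian_apply_self hf hg, Finset.sum_sub_distrib,
    laplacian_eq_iteratedFDeriv_orthonormalBasis _ e, Finset.mul_sum, Finset.sum_mul]

end Wronskian

variable [FiniteDimensional ℝ E] [Nontrivial E] [MeasurableSpace E] [BorelSpace E]
  (μ : Measure E) [μ.IsAddHaarMeasure]

theorem IsPosHomogeneous.integral_exp_neg_norm_sq_smul_fderiv {A : E → F}
    (hA : IsPosHomogeneous A a) (hc : ContDiff ℝ 1 A) (v : E) :
    ∫ x, Real.exp (-‖x‖ ^ 2) • fderiv ℝ A x v ∂μ =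
      (2 : ℝ) • ∫ x, Real.exp (-‖x‖ ^ 2) • inner ℝ v x • A x ∂μ := by
  have hweight (x : E) : fderiv ℝ (fun x : E ↦ Real.exp (-‖x‖ ^ 2)) x v • A x =
      (-2 : ℝ) • Real.exp (-‖x‖ ^ 2) • inner ℝ v x • A x := by
    rw [(hasFDerivAt_exp_neg_norm_sq x).fderiv]
    simp only [smul_apply, neg_apply, coe_innerSL_apply, real_inner_comm v x, nsmul_eq_mul,
      Nat.cast_ofNat, smul_eq_mul, smul_smul]
    congr 1
    ring
  have hinner : Integrable (fun x ↦ Real.exp (-‖x‖ ^ 2) • inner ℝ v x • A x) μ :=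
    ((isPosHomogeneous_inner_right v).smul hA).integrable_exp_neg_norm_sq_smul μ
      ((continuous_const.inner continuous_id).smul hc.continuous)
  have hderiv : Integrable (fun x ↦ Real.exp (-‖x‖ ^ 2) • fderiv ℝ A x v) μ :=
    (hA.fderiv_apply v).integrable_exp_neg_norm_sq_smul μ
      ((hc.continuous_fderiv one_ne_zero).clm_apply continuous_const)
  rw [integral_smul_fderiv_eq_neg_fderiv_smul_of_integrable
    (by simp only [hweight]; exact hinner.smul (-2 : ℝ)) hderiv
    (hA.integrable_exp_neg_norm_sq_smul μ hc.continuous)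
    (fun x _ ↦ (hasFDerivAt_exp_neg_norm_sq x).differentiableAt)
    (fun x _ ↦ hc.differentiable one_ne_zero x)]
  simp only [hweight]
  rw [integral_smul, neg_smul, neg_neg]

theorem IsPosHomogeneous.integral_exp_neg_norm_sq_smul_green {f g : E → 𝔸}
    (hf : IsPosHomogeneous f a) (hg : IsPosHomogeneous g b)
    (hfc : ContDiff ℝ 2 f) (hgc : ContDiff ℝ 2 g) :
    ∫ x, Real.exp (-‖x‖ ^ 2) • (f x * Δ g x - Δ f x * g x) ∂μ =
      (2 * (b - a)) • ∫ x, Real.exp (-‖x‖ ^ 2) • (f x * g x) ∂μ := by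
  let e := stdOrthonormalBasis ℝ E
  have hW i := isPosHomogeneous_dirWronskian hf hg (e i)
  have hWc i := contDiff_dirWronskian hfc hgc (e i)
  calc
    _ = ∑ i, ∫ x, Real.exp (-‖x‖ ^ 2) • fderiv ℝ (dirWronskian f g (e i)) x (e i) ∂μ := by
      simp only [← sum_fderiv_dirWronskian e hfc hgc, Finset.smul_sum]
      exact integral_finsetSum _ fun i _ ↦
        ((hW i).fderiv_apply (e i)).integrable_exp_neg_norm_sq_smul μ
          (((hWc i).continuous_fderiv one_ne_zero).clm_apply continuous_const)
    _ = (2 : ℝ) • ∑ i, ∫ x, Real.exp (-‖x‖ ^ 2) •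
          inner ℝ (e i) x • dirWronskian f g (e i) x ∂μ := by
      simp only [(hW _).integral_exp_neg_norm_sq_smul_fderiv μ (hWc _), Finset.smul_sum]
    _ = (2 : ℝ) • ∫ x, Real.exp (-‖x‖ ^ 2) • dirWronskian f g x x ∂μ := by
      rw [← integral_finsetSum]
      · simp only [← Finset.smul_sum, sum_inner_smul_dirWronskian]
      exact fun i _ ↦
        ((isPosHomogeneous_inner_right (e i)).smul (hW i)).integrable_exp_neg_norm_sq_smul μ
          ((continuous_const.inner continuous_id).smul (hWc i).continuous)
    _ = _ := by
      simp only [dirWronskian_self_of_isPosHomogeneous hf hg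
        (hfc.differentiable two_ne_zero _) (hgc.differentiable two_ne_zero _),
        smul_comm _ (b - a)]
      rw [integral_smul, smul_smul]

theorem integral_sphere_mul_eq_zero_of_harmonic_homogeneous_ne_degree_general [CompleteSpace 𝔸]
    {f g : E → 𝔸} (hab : a ≠ b) (hf : IsPosHomogeneous f a) (hg : IsPosHomogeneous g b)
    (hfc : ContDiff ℝ 2 f) (hgc : ContDiff ℝ 2 g) (hΔf : Δ f = 0) (hΔg : Δ g = 0) :
    ∫ n : sphere (0 : E) 1, f n * g n ∂μ.toSphere = 0 := by
  rcases eq_or_ne f 0 with rfl | hf0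
  · simp
  rcases eq_or_ne g 0 with rfl | hg0
  · simp
  obtain ⟨x, hx⟩ := Function.ne_iff.1 hf0
  obtain ⟨y, hy⟩ := Function.ne_iff.1 hg0
  have hdeg : 0 < finrank ℝ E + (a + b) := by
    have : (0 : ℝ) < finrank ℝ E := mod_cast finrank_pos
    linarith [hf.degree_nonneg hfc.continuous hx, hg.degree_nonneg hgc.continuous hy]
  have hgauss : ∫ x, Real.exp (-‖x‖ ^ 2) • (f x * g x) ∂μ = 0 := by
    have hgreen := hf.integral_exp_neg_norm_sq_smul_green μ hg hfc hgc
    simp only [hΔf, hΔg, Pi.zero_apply, mul_zero, zero_mul, sub_zero, smul_zero,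
      integral_zero] at hgreen
    exact (smul_eq_zero.1 hgreen.symm).resolve_left
      (mul_ne_zero two_ne_zero (sub_ne_zero.2 hab.symm))
  rw [(hf.mul hg).integral_exp_neg_norm_sq_smul μ hdeg] at hgauss
  exact (smul_eq_zero.1 hgauss).resolve_left
    (mul_pos one_half_pos (Real.Gamma_pos_of_pos (half_pos hdeg))).ne'

end InnerProductSpace

section Polynomial

theorem contDiff_evalP (P : MvPolynomial (Fin 3) ℂ) {n : WithTop ℕ∞} : ContDiff ℝ n (evalP P) := by
  have hcoord (i : Fin 3) : AnalyticOnNhd ℝ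
      (fun x : EuclideanSpace ℝ (Fin 3) ↦ (x i : ℂ)) univ := fun x _ ↦
    (Complex.ofRealCLM.comp (EuclideanSpace.proj i)).analyticAt x
  exact (AnalyticOnNhd.aeval_mvPolynomial hcoord P).contDiff

theorem isPosHomogeneous_evalP {P : MvPolynomial (Fin 3) ℂ} {k : ℕ} (hP : P.IsHomogeneous k) :
    IsPosHomogeneous (evalP P) k := fun r _ x ↦ by
  rw [evalP, evalP, MvPolynomial.eval_eq', MvPolynomial.eval_eq', Finset.smul_sum]
  refine Finset.sum_congr rfl fun d hd ↦ ?_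
  have hdeg : ∑ i, d i = k := by
    simpa [Finsupp.weight_apply, Finsupp.sum_fintype] using hP (MvPolynomial.mem_support_iff.1 hd)
  simp only [PiLp.smul_apply, smul_eq_mul, Complex.ofReal_mul, mul_pow, Finset.prod_mul_distrib,
    Finset.prod_pow_eq_pow_sum, hdeg, Real.rpow_natCast, Complex.real_smul, Complex.ofReal_pow]
  ring

theorem sum_pdE_pdE_eq_laplacian {f : EuclideanSpace ℝ (Fin 3) → ℂ} (hf : ContDiff ℝ 2 f) :
    (fun x ↦ ∑ j, pdE j (fun y ↦ pdE j f y) x) = Δ f := by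
  simp [laplacian_eq_iteratedFDeriv_orthonormalBasis f (EuclideanSpace.basisFun (Fin 3) ℝ), pdE,
    fderiv_fderiv_apply hf]

end Polynomial

/-- Harmonic homogeneous polynomials of distinct degrees `ℓ ≠ m` are orthogonal with
respect to the surface measure of the unit sphere `S² ⊂ ℝ³`:
`∫_{S²} p(n) q(n) dA(n) = 0`. -/
theorem integral_sphere_mul_eq_zero_of_harmonic_homogeneous_ne_degree
    (P Q : MvPolynomial (Fin 3) ℂ) (ℓ m : ℕ) (hne : ℓ ≠ m)
    (hP : P.IsHomogeneous ℓ) (hQ : Q.IsHomogeneous m)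
    (hPharm : ∀ x, ∑ j : Fin 3, pdE j (fun y => pdE j (evalP P) y) x = 0)
    (hQharm : ∀ x, ∑ j : Fin 3, pdE j (fun y => pdE j (evalP Q) y) x = 0) :
    (∫ n : Metric.sphere (0 : EuclideanSpace ℝ (Fin 3)) 1,
      evalP P (n : EuclideanSpace ℝ (Fin 3)) * evalP Q (n : EuclideanSpace ℝ (Fin 3))
        ∂((volume : Measure (EuclideanSpace ℝ (Fin 3))).toSphere)) = 0 :=
  integral_sphere_mul_eq_zero_of_harmonic_homogeneous_ne_degree_general volume
    (Nat.cast_injective.ne hne) (isPosHomogeneous_evalP hP) (isPosHomogeneous_evalP hQ)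
    (contDiff_evalP P) (contDiff_evalP Q)
    ((sum_pdE_pdE_eq_laplacian (contDiff_evalP P)).symm.trans (funext hPharm))
    ((sum_pdE_pdE_eq_laplacian (contDiff_evalP Q)).symm.trans (funext hQharm))
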